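/- For all integers a, b, k ≥ 1 there exists an integer g(a,b,k) with g(a,b,1) = a, g(a,1,k+1) ≤ g(a,a,k) and g(a,b+1,k+1) ≤ g(a,b,k+1) + g(a,a,k), such that the following holds: let h = g(a,b,k), let the major vertices of T_h be colored with k colors, and let c be one of the colors. Then either there is a monotone homeomorphic embedding η: T_a ↪ T_h such that all major vertices of T_a map to major vertices of the same color, or there is a monotone homeomorphic embedding η: T_b ↪ T_h such that all major vertices of T_b map to major vertices of color c. -/

import Mathlib

/-!
Common definitions: minors, widths, connectivity, the specific graphs
`K4`, `K23`, `C32`, `graphA`, the binary trees `CT_h`, the graphs `𝒫_k`, `𝒬_k`,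
the trees `T_h`, homeomorphic embeddings, cascades, and related notions,
following Dang--Thomas, "Minors of two-connected graphs of large path-width".
-/

open SimpleGraph

/-- A minor model of `H` in `G`: branch sets `f w` are nonempty, connected,
pairwise disjoint, and edges of `H` are realized by edges of `G` between branch sets. -/
def IsMinorModel {W V : Type*} (H : SimpleGraph W) (G : SimpleGraph V) (f : W → Set V) : Prop :=
  (∀ w, (f w).Nonempty) ∧
  (∀ w, (G.induce (f w)).Connected) ∧
  (∀ w₁ w₂ : W, w₁ ≠ w₂ → Disjoint (f w₁) (f w₂)) ∧
  (∀ w₁ w₂ : W, H.Adj w₁ w₂ → ∃ v₁ ∈ f w₁, ∃ v₂ ∈ f w₂, G.Adj v₁ v₂)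

/-- `H` is (isomorphic to) a minor of `G`. -/
def IsMinor {W V : Type*} (H : SimpleGraph W) (G : SimpleGraph V) : Prop :=
  ∃ f : W → Set V, IsMinorModel H G f

/-- The complete graph on four vertices. -/
def K4 : SimpleGraph (Fin 4) := ⊤

/-- The complete bipartite graph `K_{2,3}`. -/
def K23 : SimpleGraph (Fin 2 ⊕ Fin 3) := completeBipartiteGraph (Fin 2) (Fin 3)

/-- The graph `A`: a cycle `a₁a₂a₃a₄a₅a₆a₁` plus the edges `a₁a₃`, `a₃a₅`, `a₅a₁`. -/
def graphA : SimpleGraph (Fin 6) :=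
  SimpleGraph.fromEdgeSet
    {s(0, 1), s(1, 2), s(2, 3), s(3, 4), s(4, 5), s(5, 0), s(0, 2), s(2, 4), s(4, 0)}

/-- The graph `C_{3,2}`: two disjoint triangles. -/
def C32 : SimpleGraph (Fin 2 × Fin 3) :=
  SimpleGraph.fromRel (fun u v => u.1 = v.1)

/-- A graph is outerplanar iff it has no `K₄` minor and no `K_{2,3}` minor
(the classical characterization of outerplanarity). -/
def Outerplanar {V : Type*} (G : SimpleGraph V) : Prop :=
  ¬ IsMinor K4 G ∧ ¬ IsMinor K23 G

/-- `G` is `k`-connected: it has more than `k` vertices and deleting fewer than `k`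
vertices leaves a connected graph. -/
def IsKConnected {V : Type*} [Fintype V] (k : ℕ) (G : SimpleGraph V) : Prop :=
  k + 1 ≤ Fintype.card V ∧
  ∀ S : Finset V, S.card < k → (G.induce ((↑S : Set V)ᶜ)).Connected

/-- `(Tr, X)` is a tree-decomposition of `G`: `Tr` is a tree, the bags `X t` cover all
vertices and edges (W1), and whenever `t₂` lies on the path of `Tr` between `t₁` and `t₃`
we have `X t₁ ∩ X t₃ ⊆ X t₂` (W2). -/
def IsTreeDecomp {V T : Type*} (G : SimpleGraph V) (Tr : SimpleGraph T) (X : T → Finset V) :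
    Prop :=
  Tr.IsTree ∧
  (∀ v : V, ∃ t, v ∈ X t) ∧
  (∀ u v : V, G.Adj u v → ∃ t, u ∈ X t ∧ v ∈ X t) ∧
  (∀ (t₁ t₂ t₃ : T) (p : Tr.Walk t₁ t₃), p.IsPath → t₂ ∈ p.support →
    ∀ v : V, v ∈ X t₁ → v ∈ X t₃ → v ∈ X t₂)

/-- A path-decomposition of `G`, with bags indexed by `Fin n`. -/
def IsPathDecomp {V : Type*} (G : SimpleGraph V) {n : ℕ} (X : Fin n → Finset V) : Prop :=
  (∀ v : V, ∃ i, v ∈ X i) ∧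
  (∀ u v : V, G.Adj u v → ∃ i, u ∈ X i ∧ v ∈ X i) ∧
  (∀ i j k : Fin n, i ≤ j → j ≤ k → ∀ v : V, v ∈ X i → v ∈ X k → v ∈ X j)

/-- The path-width of a finite graph: the least `w` such that `G` has a
path-decomposition all of whose bags have at most `w + 1` vertices. -/
noncomputable def pathwidth {V : Type*} [Fintype V] (G : SimpleGraph V) : ℕ :=
  sInf {w | ∃ (n : ℕ) (X : Fin n → Finset V), IsPathDecomp G X ∧ ∀ i, (X i).card ≤ w + 1}

/-- The tree-width of a finite graph: the least `w` such that `G` has a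
tree-decomposition all of whose bags have at most `w + 1` vertices. -/
noncomputable def treewidth {V : Type*} [Fintype V] (G : SimpleGraph V) : ℕ :=
  sInf {w | ∃ (T : Type) (_ : Fintype T) (Tr : SimpleGraph T) (X : T → Finset V),
    IsTreeDecomp G Tr X ∧ ∀ t, (X t).card ≤ w + 1}

/-- Vertices of the binary tree `CT_h`: paths from the root, recorded as reversed
lists of left/right moves, of length at most `h`. -/
abbrev CTVert (h : ℕ) := {l : List Bool // l.length ≤ h}

/-- The binary tree `CT_h` of height `h`. -/
def CTgraph (h : ℕ) : SimpleGraph (CTVert h) :=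
  SimpleGraph.fromEdgeSet
    {e | ∃ (b : Bool) (σ : List Bool) (hσ : σ.length < h),
      e = s((⟨σ, le_of_lt hσ⟩ : CTVert h), (⟨b :: σ, by simpa using hσ⟩ : CTVert h))}

/-- The graph `𝒫_k`: the binary tree `CT_k` together with one extra vertex (`none`)
adjacent to every leaf of `CT_k`. -/
def Pgraph (k : ℕ) : SimpleGraph (Option (CTVert k)) :=
  SimpleGraph.fromEdgeSet
    ({e | ∃ (b : Bool) (σ : List Bool) (hσ : σ.length < k),
        e = s(some (⟨σ, le_of_lt hσ⟩ : CTVert k), some (⟨b :: σ, by simpa using hσ⟩ : CTVert k))} ∪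
     {e | ∃ l : CTVert k, l.1.length = k ∧ e = s(none, some l)})

/-- Vertices of `𝒬_k`: the two base vertices of the root triangle (`Sum.inl false` and
`Sum.inl true`), together with one apex vertex for each node of the complete binary tree
of depth `< k` (recorded as a reversed list of moves). -/
abbrev QVert (k : ℕ) := Bool ⊕ {l : List Bool // l.length < k}

/-- The two ends of the base edge of the copy of the triangle at node `σ` of `𝒬_k`. -/
def qbase (k : ℕ) : List Bool → QVert k × QVert k
  | [] => (Sum.inl false, Sum.inl true)
  | b :: σ =>
      ((if b then (qbase k σ).2 else (qbase k σ).1),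
        if h : σ.length < k then Sum.inr ⟨σ, h⟩ else Sum.inl false)

/-- The graph `𝒬_k`, built from triangles as in the recursive definition: the triangle at
node `σ` consists of the base edge `qbase k σ` together with the apex vertex `Sum.inr σ`;
the base edge of `𝒬_k` is `s(Sum.inl false, Sum.inl true)`. -/
def Qgraph (k : ℕ) : SimpleGraph (QVert k) :=
  SimpleGraph.fromEdgeSet
    ({s(Sum.inl false, Sum.inl true)} ∪
     {e | ∃ (σ : List Bool) (h : σ.length < k),
        e = s(Sum.inr ⟨σ, h⟩, (qbase k σ).1) ∨ e = s(Sum.inr ⟨σ, h⟩, (qbase k σ).2)})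

/-- The minor vertices of the tree `T_h` (one for each string of length `≤ h`). -/
abbrev MVert (h : ℕ) := {l : List Bool // l.length ≤ h}

/-- The major vertices of the tree `T_h` (one for each string of length `≤ h - 1`). -/
abbrev JVert (h : ℕ) := {l : List Bool // l.length + 1 ≤ h}

/-- Vertices of the tree `T_h` (obtained from `CT_h` by subdividing every edge not incident
with a degree-one vertex and adding the minor root). -/
abbrev TVert (h : ℕ) := MVert h ⊕ JVert h

/-- The tree `T_h`: each major vertex `σ` is adjacent to the minor vertices `σ` (its parent),
`false :: σ` (its left neighbor) and `true :: σ` (its right neighbor). -/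
def Tgraph (h : ℕ) : SimpleGraph (TVert h) :=
  SimpleGraph.fromEdgeSet
    {e | ∃ (σ : List Bool) (hσ : σ.length + 1 ≤ h),
      e = s(Sum.inr ⟨σ, hσ⟩, Sum.inl ⟨σ, Nat.le_of_succ_le hσ⟩) ∨
      ∃ b : Bool, e = s(Sum.inr ⟨σ, hσ⟩, Sum.inl ⟨b :: σ, by simpa using hσ⟩)}

/-- A homeomorphic embedding of `TA` into `TB`: an injection such that for any two edges of
`TA` sharing an end `t`, the corresponding paths of `TB` are edge-disjoint. -/
def IsHomeoEmb {A B : Type*} (TA : SimpleGraph A) (TB : SimpleGraph B) (η : A → B) : Prop :=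
  Function.Injective η ∧
  ∀ ⦃t t₁ t₂ : A⦄, TA.Adj t t₁ → TA.Adj t t₂ → t₁ ≠ t₂ →
    ∀ (p₁ : TB.Walk (η t) (η t₁)) (p₂ : TB.Walk (η t) (η t₂)),
      p₁.IsPath → p₂.IsPath → ∀ e ∈ p₁.edges, e ∉ p₂.edges

/-- `v` lies in the span of `η`: it lies on a path of `TB` between two vertices in the
image of `η`. -/
def inSpan {A B : Type*} (TB : SimpleGraph B) (η : A → B) (v : B) : Prop :=
  ∃ (a₁ a₂ : A) (p : TB.Walk (η a₁) (η a₂)), p.IsPath ∧ v ∈ p.support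

/-- A cascade of height `h` and size `s` in the tree-decomposition `(Tr, X)`:
a homeomorphic embedding of `T_h` with `|X (η t)| = s` for every minor vertex `t`
and `|X t| ≥ s` for every `t` in the span. -/
def IsCascade {V T : Type*} (Tr : SimpleGraph T) (X : T → Finset V) (h s : ℕ)
    (η : TVert h → T) : Prop :=
  IsHomeoEmb (Tgraph h) Tr η ∧
  (∀ l : MVert h, (X (η (Sum.inl l))).card = s) ∧
  (∀ t : T, inSpan Tr η t → s ≤ (X t).card)

/-- An injective cascade with common intersection set `I`. -/
def IsInjectiveCascade {V T : Type*} (Tr : SimpleGraph T) (X : T → Finset V) (h s : ℕ)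
    (η : TVert h → T) (I : Finset V) : Prop :=
  IsCascade Tr X h s η ∧ I.card < s ∧
  ∀ t t' : TVert h, t ≠ t' → ((X (η t) : Set V) ∩ (X (η t') : Set V)) = (I : Set V)

/-- A family of `s` disjoint paths in `G \ I` (a linkage). -/
def IsLinkage {V : Type*} (G : SimpleGraph V) (I : Finset V) {s : ℕ} {x y : Fin s → V}
    (P : ∀ i : Fin s, G.Walk (x i) (y i)) : Prop :=
  (∀ i, (P i).IsPath) ∧
  (∀ i, ∀ v ∈ (P i).support, v ∉ I) ∧
  (∀ i j, i ≠ j → ∀ v ∈ (P i).support, v ∉ (P j).support)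

/-- An ordered cascade: an injective cascade of size `s + |I|` with common intersection set
`I`, together with orderings `ξ t : Fin s → X (η t) \ I` of the bags at minor vertices, such
that at every major vertex there are left and right linkages connecting corresponding
vertices. -/
def IsOrderedCascade {V T : Type*} (G : SimpleGraph V) (Tr : SimpleGraph T)
    (X : T → Finset V) (h s : ℕ) (η : TVert h → T) (I : Finset V)
    (ξ : MVert h → Fin s → V) : Prop :=
  IsInjectiveCascade Tr X h (s + I.card) η I ∧
  (∀ t : MVert h, Function.Injective (ξ t) ∧
    Set.range (ξ t) = (X (η (Sum.inl t)) : Set V) \ (I : Set V)) ∧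
  ∀ (σ : List Bool) (hσ : σ.length + 1 ≤ h),
    (∃ P : ∀ i : Fin s,
        G.Walk (ξ ⟨σ, Nat.le_of_succ_le hσ⟩ i) (ξ ⟨false :: σ, by simpa using hσ⟩ i),
      IsLinkage G I P) ∧
    (∃ Q : ∀ i : Fin s,
        G.Walk (ξ ⟨σ, Nat.le_of_succ_le hσ⟩ i) (ξ ⟨true :: σ, by simpa using hσ⟩ i),
      IsLinkage G I Q)

/-- The vertex set of the `η`-torso at the major vertex `σ` of `T_h`: the union of the bags
`X t - I` over all `t` such that the path in `Tr` from `t` to `η σ` contains none of the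
images of the three minor neighbors of `σ` as an internal vertex. -/
def torsoSet {V T : Type*} (Tr : SimpleGraph T) (X : T → Finset V) {h : ℕ}
    (η : TVert h → T) (I : Finset V) (σ : List Bool) (hσ : σ.length + 1 ≤ h) : Set V :=
  {v | v ∉ I ∧ ∃ t : T,
    (∀ p : Tr.Walk t (η (Sum.inr ⟨σ, hσ⟩)), p.IsPath →
      ∀ u : T,
        (u = η (Sum.inl ⟨σ, Nat.le_of_succ_le hσ⟩) ∨
         u = η (Sum.inl ⟨false :: σ, by simpa using hσ⟩) ∨
         u = η (Sum.inl ⟨true :: σ, by simpa using hσ⟩)) →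
        u ∈ p.support → u = t ∨ u = η (Sum.inr ⟨σ, hσ⟩)) ∧
    v ∈ X t}

/-- `H` is a tripod in `G` with all vertices in `S`, center `c` and feet `f₁, f₂, f₃`:
the union of three paths from `c` to the feet, pairwise disjoint except for `c`,
at least two of which have length at least one. -/
def IsTripodOn {V : Type*} (G : SimpleGraph V) (S : Set V) (H : G.Subgraph)
    (c f₁ f₂ f₃ : V) : Prop :=
  ∃ (W₁ : G.Walk c f₁) (W₂ : G.Walk c f₂) (W₃ : G.Walk c f₃),
    W₁.IsPath ∧ W₂.IsPath ∧ W₃.IsPath ∧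
    (∀ v ∈ W₁.support, v ∈ S) ∧ (∀ v ∈ W₂.support, v ∈ S) ∧ (∀ v ∈ W₃.support, v ∈ S) ∧
    (∀ v, v ∈ W₁.support → v ∈ W₂.support → v = c) ∧
    (∀ v, v ∈ W₁.support → v ∈ W₃.support → v = c) ∧
    (∀ v, v ∈ W₂.support → v ∈ W₃.support → v = c) ∧
    ((1 ≤ W₁.length ∧ 1 ≤ W₂.length) ∨ (1 ≤ W₁.length ∧ 1 ≤ W₃.length) ∨
      (1 ≤ W₂.length ∧ 1 ≤ W₃.length)) ∧
    H = W₁.toSubgraph ⊔ W₂.toSubgraph ⊔ W₃.toSubgraph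

/-- The major vertex `σ` has property `A_{ij}` in the ordered cascade `η` with orderings
`ξ`: there are two disjoint tripods in the `η`-torso at `σ`, with feet as prescribed. -/
def HasPropA {V T : Type*} (G : SimpleGraph V) (Tr : SimpleGraph T) (X : T → Finset V)
    {h s : ℕ} (η : TVert h → T) (I : Finset V) (ξ : MVert h → Fin s → V)
    (σ : List Bool) (hσ : σ.length + 1 ≤ h) (i j : Fin s) : Prop :=
  ∃ (Li Lj : G.Subgraph) (ci cj : V),
    (∃ m₂ m₃ : Fin s, (m₂ = i ∨ m₂ = j) ∧ (m₃ = i ∨ m₃ = j) ∧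
      IsTripodOn G (torsoSet Tr X η I σ hσ) Li ci
        (ξ ⟨σ, Nat.le_of_succ_le hσ⟩ i)
        (ξ ⟨false :: σ, by simpa using hσ⟩ m₂)
        (ξ ⟨true :: σ, by simpa using hσ⟩ m₃)) ∧
    (∃ m₂ m₃ : Fin s, (m₂ = i ∨ m₂ = j) ∧ (m₃ = i ∨ m₃ = j) ∧
      IsTripodOn G (torsoSet Tr X η I σ hσ) Lj cj
        (ξ ⟨σ, Nat.le_of_succ_le hσ⟩ j)
        (ξ ⟨false :: σ, by simpa using hσ⟩ m₂)
        (ξ ⟨true :: σ, by simpa using hσ⟩ m₃)) ∧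
    Disjoint Li.verts Lj.verts

/-- The major vertex `σ` has property `B_{ij}`: there are two tripods `L_i`, `L_j` in the
`η`-torso at `σ`, with feet `v_{m,1}, v_{m,2}, v_{m,3}` where `{v_{i,y}, v_{j,y}}` equals
`{ξ_{t_y} i, ξ_{t_y} j}` for each `y`, which intersect exactly in a path that is the
intersection of the branch of `L_i` to `v_{i,3}` and the branch of `L_j` to `v_{j,2}`,
and which avoids both centers. -/
def HasPropB {V T : Type*} (G : SimpleGraph V) (Tr : SimpleGraph T) (X : T → Finset V)
    {h s : ℕ} (η : TVert h → T) (I : Finset V) (ξ : MVert h → Fin s → V)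
    (σ : List Bool) (hσ : σ.length + 1 ≤ h) (i j : Fin s) : Prop :=
  ∃ (vi vj : Fin 3 → V) (ci cj : V)
    (Wi : ∀ y : Fin 3, G.Walk ci (vi y)) (Wj : ∀ y : Fin 3, G.Walk cj (vj y)),
    (∀ y : Fin 3, ({vi y, vj y} : Set V) =
      {(![ξ ⟨σ, Nat.le_of_succ_le hσ⟩,
          ξ ⟨false :: σ, by simpa using hσ⟩,
          ξ ⟨true :: σ, by simpa using hσ⟩] : Fin 3 → Fin s → V) y i,
       (![ξ ⟨σ, Nat.le_of_succ_le hσ⟩,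
          ξ ⟨false :: σ, by simpa using hσ⟩,
          ξ ⟨true :: σ, by simpa using hσ⟩] : Fin 3 → Fin s → V) y j}) ∧
    (∀ y, (Wi y).IsPath) ∧ (∀ y, (Wj y).IsPath) ∧
    (∀ y, ∀ v ∈ (Wi y).support, v ∈ torsoSet Tr X η I σ hσ) ∧
    (∀ y, ∀ v ∈ (Wj y).support, v ∈ torsoSet Tr X η I σ hσ) ∧
    (∀ y y' : Fin 3, y ≠ y' → ∀ v, v ∈ (Wi y).support → v ∈ (Wi y').support → v = ci) ∧
    (∀ y y' : Fin 3, y ≠ y' → ∀ v, v ∈ (Wj y).support → v ∈ (Wj y').support → v = cj) ∧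
    ((1 ≤ (Wi 0).length ∧ 1 ≤ (Wi 1).length) ∨ (1 ≤ (Wi 0).length ∧ 1 ≤ (Wi 2).length) ∨
      (1 ≤ (Wi 1).length ∧ 1 ≤ (Wi 2).length)) ∧
    ((1 ≤ (Wj 0).length ∧ 1 ≤ (Wj 1).length) ∨ (1 ≤ (Wj 0).length ∧ 1 ≤ (Wj 2).length) ∨
      (1 ≤ (Wj 1).length ∧ 1 ≤ (Wj 2).length)) ∧
    (((Wi 0).toSubgraph ⊔ (Wi 1).toSubgraph ⊔ (Wi 2).toSubgraph) ⊓
      ((Wj 0).toSubgraph ⊔ (Wj 1).toSubgraph ⊔ (Wj 2).toSubgraph)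
        = (Wi 2).toSubgraph ⊓ (Wj 1).toSubgraph) ∧
    ∃ (x y : V) (p : G.Walk x y), p.IsPath ∧
      (Wi 2).toSubgraph ⊓ (Wj 1).toSubgraph = p.toSubgraph ∧
      ci ∉ p.support ∧ cj ∉ p.support

/-- The major vertex `σ` has property `AB_{ij}`: in the `η`-torso at `σ` there are disjoint
paths `L_i, L_j` from `ξ_{t₁}(m)` to `ξ_{t₂}(m)` and disjoint paths `R_i, R_j` from
`ξ_{t₁}(m)` to `ξ_{t₃}(m)`, for `m ∈ {i, j}`. -/
def HasPropAB {V T : Type*} (G : SimpleGraph V) (Tr : SimpleGraph T) (X : T → Finset V)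
    {h s : ℕ} (η : TVert h → T) (I : Finset V) (ξ : MVert h → Fin s → V)
    (σ : List Bool) (hσ : σ.length + 1 ≤ h) (i j : Fin s) : Prop :=
  ∃ (Li : G.Walk (ξ ⟨σ, Nat.le_of_succ_le hσ⟩ i) (ξ ⟨false :: σ, by simpa using hσ⟩ i))
    (Lj : G.Walk (ξ ⟨σ, Nat.le_of_succ_le hσ⟩ j) (ξ ⟨false :: σ, by simpa using hσ⟩ j))
    (Ri : G.Walk (ξ ⟨σ, Nat.le_of_succ_le hσ⟩ i) (ξ ⟨true :: σ, by simpa using hσ⟩ i))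
    (Rj : G.Walk (ξ ⟨σ, Nat.le_of_succ_le hσ⟩ j) (ξ ⟨true :: σ, by simpa using hσ⟩ j)),
    Li.IsPath ∧ Lj.IsPath ∧ Ri.IsPath ∧ Rj.IsPath ∧
    (∀ v ∈ Li.support, v ∈ torsoSet Tr X η I σ hσ) ∧
    (∀ v ∈ Lj.support, v ∈ torsoSet Tr X η I σ hσ) ∧
    (∀ v ∈ Ri.support, v ∈ torsoSet Tr X η I σ hσ) ∧
    (∀ v ∈ Rj.support, v ∈ torsoSet Tr X η I σ hσ) ∧
    (∀ v ∈ Li.support, v ∉ Lj.support) ∧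
    (∀ v ∈ Ri.support, v ∉ Rj.support)

/-- A monotone homeomorphic embedding `T_a ↪ T_h`: the minor root maps to the minor root,
and for every major vertex with trinity `(t₁, t₂, t₃)`, the images of `t₂` and `t₃` are the
left and right neighbors of the (major) image of the vertex. -/
def IsMonotoneEmb (a h : ℕ) (γ : TVert a → TVert h) : Prop :=
  IsHomeoEmb (Tgraph a) (Tgraph h) γ ∧
  γ (Sum.inl ⟨[], Nat.zero_le a⟩) = Sum.inl ⟨[], Nat.zero_le h⟩ ∧
  ∀ (σ : List Bool) (hσ : σ.length + 1 ≤ a),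
    ∃ (τ : List Bool) (hτ : τ.length + 1 ≤ h),
      γ (Sum.inr ⟨σ, hσ⟩) = Sum.inr ⟨τ, hτ⟩ ∧
      γ (Sum.inl ⟨false :: σ, by simpa using hσ⟩) = Sum.inl ⟨false :: τ, by simpa using hτ⟩ ∧
      γ (Sum.inl ⟨true :: σ, by simpa using hσ⟩) = Sum.inl ⟨true :: τ, by simpa using hτ⟩

namespace MonoEmb

lemma walk_side {V : Type*} {G : SimpleGraph V} (A : Set V) (u v : V)
    (hc : ∀ x y, x ∉ A → y ∈ A → G.Adj x y → x = u ∧ y = v) :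
    ∀ {w x : V} (q : G.Walk w x), u ∉ q.support → (w ∈ A ↔ x ∈ A) := by
  intro w x q
  induction q with
  | nil => intro _; rfl
  | @cons a b c hab q ih =>
    intro hu
    rw [Walk.support_cons, List.mem_cons, not_or] at hu
    rw [← ih hu.2]
    constructor
    · intro ha
      by_contra hb
      have := hc b a hb ha hab.symm
      exact hu.2 (this.1 ▸ q.start_mem_support)
    · intro hb
      by_contra ha
      exact hu.1 (hc a b ha hb hab).1.symm

lemma paths_disj {V : Type*} {G : SimpleGraph V} (A : Set V) (u v x : V)
    (hc : ∀ x y, x ∉ A → y ∈ A → G.Adj x y → x = u ∧ y = v)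
    (hu : u ∉ A) (hv : v ∈ A) (hx : x ∉ A) (p₁ : G.Walk u v) (p₂ : G.Walk u x)
    (h₁ : p₁.IsPath) (h₂ : p₂.IsPath) : ∀ e ∈ p₁.edges, e ∉ p₂.edges := by
  classical
  have key : ∀ e ∈ p₁.edges, e = s(u, v) := by
    cases p₁ with
    | nil => simp
    | @cons _ w _ h q =>
      rw [Walk.cons_isPath_iff] at h₁
      have hw : w ∈ A := (walk_side A u v hc q h₁.2).2 hv
      obtain rfl := (hc u w hu hw h).2
      have : q = Walk.nil := by
        cases q with
        | nil => rfl
        | cons h' q' =>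
          have := h₁.1
          rw [Walk.cons_isPath_iff] at this
          exact absurd q'.end_mem_support this.2
      subst this
      simp
  intro e he he2
  obtain rfl := key e he
  have hvm := Walk.snd_mem_support_of_mem_edges p₂ he2
  cases p₂ with
  | nil =>
    rw [Walk.support_nil, List.mem_singleton] at hvm
    exact hu (hvm ▸ hv)
  | cons h q =>
    rw [Walk.cons_isPath_iff] at h₂
    rw [Walk.support_cons, List.mem_cons] at hvm
    rcases hvm with hvm | hvm
    · exact hu (hvm ▸ hv)
    · refine hx ((walk_side A u v hc (q.dropUntil v hvm) ?_).1 hv)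
      exact fun hh => h₂.2 (q.support_dropUntil_subset hvm hh)

lemma adj_lr {h : ℕ} (l : MVert h) (j : JVert h) :
    (Tgraph h).Adj (Sum.inl l) (Sum.inr j) ↔ (l.1 = j.1 ∨ ∃ b, l.1 = b :: j.1) := by
  obtain ⟨l, hl⟩ := l
  obtain ⟨j, hj⟩ := j
  unfold Tgraph
  rw [SimpleGraph.fromEdgeSet_adj]
  constructor
  · rintro ⟨⟨σ, hσ, h | ⟨b, h⟩⟩, -⟩
    · simp at h; left; simp [h.1, h.2]
    · simp at h; right; exact ⟨b, by simp [h.1, h.2]⟩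
  · rintro (h | ⟨b, h⟩)
    · simp only at h; subst h
      exact ⟨⟨l, hj, Or.inl (by simp)⟩, by simp⟩
    · simp only at h; subst h
      exact ⟨⟨j, hj, Or.inr ⟨b, by simp⟩⟩, by simp⟩

lemma adj_ll {h : ℕ} (l l' : MVert h) : ¬ (Tgraph h).Adj (Sum.inl l) (Sum.inl l') := by
  unfold Tgraph
  rw [SimpleGraph.fromEdgeSet_adj]
  rintro ⟨⟨σ, hσ, h | ⟨b, h⟩⟩, -⟩ <;> simp at h

lemma adj_rr {h : ℕ} (l l' : JVert h) : ¬ (Tgraph h).Adj (Sum.inr l) (Sum.inr l') := by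
  unfold Tgraph
  rw [SimpleGraph.fromEdgeSet_adj]
  rintro ⟨⟨σ, hσ, h | ⟨b, h⟩⟩, -⟩ <;> simp at h

/-- underlying list of a vertex -/
def lst {h : ℕ} : TVert h → List Bool
  | Sum.inl l => l.1
  | Sum.inr l => l.1

/-- subtree below the minor vertex `w` -/
def Sub (h : ℕ) (w : List Bool) : Set (TVert h) := {x | w <:+ lst x}

lemma sub_cross {h : ℕ} (b : Bool) (τ : List Bool) (hτ : τ.length + 1 ≤ h)
    (hbτ : (b :: τ).length ≤ h) (x y : TVert h)
    (hx : x ∉ Sub h (b :: τ)) (hy : y ∈ Sub h (b :: τ)) (hxy : (Tgraph h).Adj x y) :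
    x = Sum.inr ⟨τ, hτ⟩ ∧ y = Sum.inl ⟨b :: τ, hbτ⟩ := by
  rcases x with x | x <;> rcases y with y | y
  · exact absurd hxy (adj_ll _ _)
  · rw [adj_lr] at hxy
    simp only [Sub, Set.mem_setOf_eq, lst] at hx hy
    rcases hxy with h | ⟨c, h⟩
    · rw [h] at hx; exact absurd hy hx
    · rw [h] at hx; exact absurd (hy.trans (List.suffix_cons _ _)) hx
  · have hxy := hxy.symm
    rw [adj_lr] at hxy
    simp only [Sub, Set.mem_setOf_eq, lst] at hx hy
    rcases hxy with h | ⟨c, h⟩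
    · rw [h] at hy; exact absurd hy hx
    · rw [h, List.suffix_cons_iff] at hy
      rcases hy with hy | hy
      · obtain ⟨x, hx'⟩ := x
        obtain ⟨y, hy'⟩ := y
        simp only [List.cons.injEq] at hy h
        obtain ⟨rfl, rfl⟩ := hy
        subst h
        exact ⟨rfl, rfl⟩
      · exact absurd hy hx
  · exact absurd hxy (adj_rr _ _)

section emb
variable {n h : ℕ} (f : List Bool → List Bool)

lemma f_suffix (hf : ∀ b σ, σ.length + 1 < n → b :: f σ <:+ f (b :: σ)) (b : Bool) (ρ : List Bool) :
    ∀ σ, σ.length < n → b :: ρ <:+ σ → b :: f ρ <:+ f σ := by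
  intro σ
  induction σ with
  | nil => intro _ h; simp at h
  | cons c σ ih =>
    intro hn h
    have hn' : σ.length + 1 < n := by simpa using hn
    rw [List.suffix_cons_iff] at h
    rcases h with h | h
    · simp only [List.cons.injEq] at h
      obtain ⟨rfl, rfl⟩ := h
      exact hf _ _ hn'
    · exact (ih (by omega) h).trans ((List.suffix_cons _ _).trans (hf c σ hn'))

lemma suffix_cases (σ τ : List Bool) (h : σ <:+ τ) : σ = τ ∨ ∃ c, c :: σ <:+ τ := by
  obtain ⟨p, rfl⟩ := h
  rcases List.eq_nil_or_concat p with rfl | ⟨q, c, rfl⟩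
  · left; simp
  · right; exact ⟨c, q, by simp⟩

lemma f_refl (hf : ∀ b σ, σ.length + 1 < n → b :: f σ <:+ f (b :: σ)) :
    ∀ σ σ' : List Bool, σ.length < n → σ'.length < n → f σ <:+ f σ' → σ <:+ σ' := by
  intro σ
  induction σ with
  | nil => intro σ' _ _ _; exact List.nil_suffix
  | cons b σ ih =>
    intro σ' hn hn' h
    have hn1 : σ.length + 1 < n := by simpa using hn
    have h1 := (hf b σ hn1).trans h
    have h2 := ih σ' (by omega) hn' ((List.suffix_cons _ _).trans h1)
    rcases suffix_cases _ _ h2 with rfl | ⟨c, hc⟩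
    · have := h1.length_le
      simp at this
    · have h3 := f_suffix f hf c σ σ' hn' hc
      have h4 := List.suffix_of_suffix_length_le h1 h3 (by simp)
      have h5 := h4.eq_of_length (by simp)
      simp only [List.cons.injEq, and_true] at h5
      rw [h5]; exact hc

lemma f_inj (hf : ∀ b σ, σ.length + 1 < n → b :: f σ <:+ f (b :: σ))
    (σ σ' : List Bool) (h1 : σ.length < n) (h2 : σ'.length < n) (h : f σ = f σ') : σ = σ' := by
  have a := f_refl f hf σ σ' h1 h2 (h ▸ List.suffix_rfl)
  have b := f_refl f hf σ' σ h2 h1 (h ▸ List.suffix_rfl)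
  exact a.eq_of_length (le_antisymm a.length_le b.length_le)

/-- minor image -/
def fm : List Bool → List Bool
  | [] => []
  | b :: σ => b :: f σ

lemma fm_len (hl : ∀ σ : List Bool, σ.length < n → (f σ).length < h) (l : MVert n) :
    (fm f l.1).length ≤ h := by
  obtain ⟨l, hl'⟩ := l
  cases l with
  | nil => simp [fm]
  | cons b l => have := hl l (by simpa using hl'); simp [fm]; omega

/-- the embedding -/
def gam (hl : ∀ σ : List Bool, σ.length < n → (f σ).length < h) : TVert n → TVert h
  | Sum.inl l => Sum.inl ⟨fm f l.1, fm_len f hl l⟩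
  | Sum.inr j => Sum.inr ⟨f j.1, hl j.1 j.2⟩

lemma fm_suffix (hf : ∀ b σ, σ.length + 1 < n → b :: f σ <:+ f (b :: σ)) (σ : List Bool)
    (hσ : σ.length < n) : fm f σ <:+ f σ := by
  cases σ with
  | nil => exact List.nil_suffix
  | cons b σ => exact hf b σ (by simpa using hσ)

lemma not_suff (b : Bool) (τ ω : List Bool) (h : ω.length ≤ τ.length) : ¬ (b :: τ <:+ ω) := by
  intro hh; have := hh.length_le; simp at this; omega

/-- disjointness at a major vertex -/
lemma disj_major (b : Bool) (τ : List Bool) (hτ : τ.length + 1 ≤ h) (hbτ : (b :: τ).length ≤ h)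
    (ω : MVert h) (hω : ¬ b :: τ <:+ ω.1)
    (p₁ : (Tgraph h).Walk (Sum.inr ⟨τ, hτ⟩) (Sum.inl ⟨b :: τ, hbτ⟩))
    (p₂ : (Tgraph h).Walk (Sum.inr ⟨τ, hτ⟩) (Sum.inl ω))
    (h₁ : p₁.IsPath) (h₂ : p₂.IsPath) : ∀ e ∈ p₁.edges, e ∉ p₂.edges :=
  paths_disj (Sub h (b :: τ)) _ _ _ (sub_cross b τ hτ hbτ) (not_suff b τ τ le_rfl)
    (List.suffix_rfl) hω p₁ p₂ h₁ h₂

lemma disj_minor (b : Bool) (τ : List Bool) (hτ : τ.length + 1 ≤ h) (hbτ : (b :: τ).length ≤ h)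
    (ω : JVert h) (hω : b :: τ <:+ ω.1)
    (p₁ : (Tgraph h).Walk (Sum.inl ⟨b :: τ, hbτ⟩) (Sum.inr ⟨τ, hτ⟩))
    (p₂ : (Tgraph h).Walk (Sum.inl ⟨b :: τ, hbτ⟩) (Sum.inr ω))
    (h₁ : p₁.IsPath) (h₂ : p₂.IsPath) : ∀ e ∈ p₁.edges, e ∉ p₂.edges := by
  refine paths_disj (Sub h (b :: τ))ᶜ _ _ _ ?_ ?_ (not_suff b τ τ le_rfl) ?_ p₁ p₂ h₁ h₂
  · intro x y hx hy hxy
    exact (sub_cross b τ hτ hbτ y x hy (not_not.1 hx) hxy.symm).symm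
  · exact not_not.2 (List.suffix_rfl : b :: τ <:+ b :: τ)
  · exact not_not.2 hω

lemma gam_mono (hf : ∀ b σ, σ.length + 1 < n → b :: f σ <:+ f (b :: σ))
    (hl : ∀ σ : List Bool, σ.length < n → (f σ).length < h) : IsMonotoneEmb n h (gam f hl) := by
  refine ⟨⟨?_, ?_⟩, rfl, fun σ hσ => ⟨f σ, hl σ hσ, rfl, rfl, rfl⟩⟩
  · rintro (⟨x, hx⟩ | ⟨x, hx⟩) (⟨y, hy⟩ | ⟨y, hy⟩) hxy
    · simp only [gam, Sum.inl.injEq, Subtype.mk.injEq] at hxy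
      cases x with
      | nil => cases y with
        | nil => rfl
        | cons c y => simp [fm] at hxy
      | cons b x => cases y with
        | nil => simp [fm] at hxy
        | cons c y =>
          simp only [fm, List.cons.injEq] at hxy
          have := f_inj f hf x y (by simpa using hx) (by simpa using hy) hxy.2
          simp [hxy.1, this]
    · simp [gam] at hxy
    · simp [gam] at hxy
    · simp only [gam, Sum.inr.injEq, Subtype.mk.injEq] at hxy
      have := f_inj f hf x y hx hy hxy
      simp [this]
  · rintro (⟨t, ht⟩ | ⟨t, ht⟩) (⟨t₁, ht₁⟩ | ⟨t₁, ht₁⟩) (⟨t₂, ht₂⟩ | ⟨t₂, ht₂⟩) a₁ a₂ hne p₁ p₂ h₁ h₂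
    any_goals exact absurd a₁ (adj_ll _ _)
    any_goals exact absurd a₂ (adj_ll _ _)
    any_goals exact absurd a₁ (adj_rr _ _)
    any_goals exact absurd a₂ (adj_rr _ _)
    · rw [adj_lr] at a₁ a₂
      simp only at a₁ a₂
      rcases a₁ with a₁ | ⟨b, a₁⟩ <;> rcases a₂ with a₂ | ⟨c, a₂⟩
      · exact absurd (by simp [← a₁, ← a₂]) hne
      · subst a₁
        subst a₂
        intro e he he'
        exact disj_minor c (f t₂) _ _ _ (hf c t₂ (by simpa using ht₁)) p₂ p₁ h₂ h₁ e he' he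
      · subst a₂
        subst a₁
        exact disj_minor b (f t₁) _ _ _ (hf b t₁ (by simpa using ht₂)) p₁ p₂ h₁ h₂
      · subst a₁
        simp only [List.cons.injEq] at a₂
        exact absurd (by simp [a₂.2]) hne
    · have a₁ := a₁.symm
      have a₂ := a₂.symm
      rw [adj_lr] at a₁ a₂
      simp only at a₁ a₂
      rcases a₁ with a₁ | ⟨b, a₁⟩ <;> rcases a₂ with a₂ | ⟨c, a₂⟩
      · exact absurd (by simp [a₁, a₂]) hne
      · subst a₁
        subst a₂
        intro e he he'
        exact disj_major c (f t₁) _ _ _ (not_suff _ _ _ (fm_suffix f hf t₁ ht).length_le)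
          p₂ p₁ h₂ h₁ e he' he
      · subst a₂
        subst a₁
        exact disj_major b (f t₂) _ _ _ (not_suff _ _ _ (fm_suffix f hf t₂ ht).length_le)
          p₁ p₂ h₁ h₂
      · subst a₁
        subst a₂
        refine disj_major b (f t) _ _ _ ?_ p₁ p₂ h₁ h₂
        intro hh
        have := hh.eq_of_length (by simp [fm])
        simp only [fm, List.cons.injEq, and_true] at this
        exact absurd (by simp [this]) hne

end emb

/-- combinatorial embedding of a tree of height `n` below `ρ` -/
def E (P : List Bool → Prop) : ℕ → List Bool → Prop
  | 0, _ => True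
  | n + 1, ρ => ∃ τ, ρ <:+ τ ∧ P τ ∧ ∀ b, E P n (b :: τ)

lemma E_mono {P Q : List Bool → Prop} (hPQ : ∀ τ, P τ → Q τ) :
    ∀ n ρ, E P n ρ → E Q n ρ := by
  intro n
  induction n with
  | zero => intro _ _; trivial
  | succ n ih =>
    rintro ρ ⟨τ, h1, h2, h3⟩
    exact ⟨τ, h1, hPQ _ h2, fun b => ih _ (h3 b)⟩

lemma E_up {P : List Bool → Prop} (n : ℕ) (ρ ρ' : List Bool) (h : ρ' <:+ ρ) (he : E P n ρ) :
    E P n ρ' := by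
  cases n with
  | zero => trivial
  | succ n =>
    obtain ⟨τ, h1, h2, h3⟩ := he
    exact ⟨τ, h.trans h1, h2, h3⟩

lemma E_full {P : List Bool → Prop} (H : ℕ) : ∀ n ρ, ρ.length + n ≤ H →
    (∀ τ, ρ <:+ τ → τ.length < H → P τ) → E P n ρ := by
  intro n
  induction n with
  | zero => intro _ _ _; trivial
  | succ n ih =>
    intro ρ hH hP
    refine ⟨ρ, List.suffix_rfl, hP _ List.suffix_rfl (by omega), fun b => ih _ ?_ ?_⟩
    · simp; omega
    · intro τ hτ
      exact hP τ ((List.suffix_cons _ _).trans hτ)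

/-- iterate a choice function down the tree -/
def follow (ch : ℕ → List Bool → List Bool) (n : ℕ) : List Bool → List Bool
  | [] => ch (n - 1) []
  | b :: σ => ch (n - σ.length - 2) (b :: follow ch n σ)

lemma E_extract {P : List Bool → Prop} (n : ℕ) (he : E P n []) :
    ∃ f : List Bool → List Bool, (∀ σ, σ.length < n → P (f σ)) ∧
      ∀ b σ, σ.length + 1 < n → b :: f σ <:+ f (b :: σ) := by
  have : ∀ m ρ, ∃ τ, E P (m + 1) ρ → (ρ <:+ τ ∧ P τ ∧ ∀ b, E P m (b :: τ)) := by
    intro m ρ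
    by_cases h : E P (m + 1) ρ
    · obtain ⟨τ, h'⟩ := h
      exact ⟨τ, fun _ => h'⟩
    · exact ⟨[], fun h' => absurd h' h⟩
  choose ch hch using this
  have inv : ∀ σ, σ.length < n → P (follow ch n σ) ∧
      ∀ b, E P (n - σ.length - 1) (b :: follow ch n σ) := by
    intro σ
    induction σ with
    | nil =>
      intro hn
      simp only [List.length_nil] at hn
      have := hch (n - 1) [] (by rwa [Nat.sub_add_cancel hn])
      exact ⟨this.2.1, this.2.2⟩
    | cons b σ ih =>
      intro hn
      simp only [List.length_cons] at hn
      have h1 := (ih (by omega)).2 b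
      have := hch (n - σ.length - 2) (b :: follow ch n σ)
        (by rwa [show n - σ.length - 2 + 1 = n - σ.length - 1 by omega])
      refine ⟨this.2.1, ?_⟩
      rw [show n - (b :: σ).length - 1 = n - σ.length - 2 by simp; omega]
      exact this.2.2
  refine ⟨follow ch n, fun σ h => (inv σ h).1, fun b σ hn => ?_⟩
  have h1 := (inv σ (by omega)).2 b
  exact (hch (n - σ.length - 2) (b :: follow ch n σ)
        (by rwa [show n - σ.length - 2 + 1 = n - σ.length - 1 by omega])).1

/-- the function `g` -/
def gg (a b : ℕ) : ℕ → ℕ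
  | 0 => a
  | 1 => a
  | k + 2 => b * a ^ (k + 1)

lemma gg_diag (a k : ℕ) : gg a a (k + 1) = a ^ (k + 1) := by
  cases k with
  | zero => simp [gg]
  | succ k => simp [gg, pow_succ]; ring

lemma ramsey {K : ℕ} (a : ℕ) (C : List Bool → Fin K) : ∀ k b : ℕ, ∀ (S : Finset (Fin K)) (c₀ : Fin K)
    (ρ : List Bool) (H : ℕ), S.card = k + 1 → c₀ ∈ S → ρ.length + gg a b (k + 1) ≤ H →
    (∀ τ, ρ <:+ τ → τ.length < H → C τ ∈ S) →
    (∃ col, E (fun τ => τ.length < H ∧ C τ = col) a ρ) ∨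
      E (fun τ => τ.length < H ∧ C τ = c₀) b ρ := by
  intro k
  induction k with
  | zero =>
    intro b S c₀ ρ H hS hc hH hC
    left
    refine ⟨c₀, E_full H a ρ hH fun τ h1 h2 => ⟨h2, ?_⟩⟩
    exact Finset.card_le_one.1 (by omega) _ (hC τ h1 h2) _ hc
  | succ k ihk =>
    intro b
    induction b with
    | zero => intro _ _ _ _ _ _ _ _; right; trivial
    | succ b ihb =>
      intro S c₀ ρ H hS hc hH hC
      have e1 : gg a (b + 1) (k + 1 + 1) = gg a b (k + 1 + 1) + a ^ (k + 1) := by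
        simp [gg]; ring
      by_cases hex : ∃ τ, ρ <:+ τ ∧ τ.length < ρ.length + a ^ (k + 1) ∧ C τ = c₀
      · obtain ⟨τ, h1, h2, h3⟩ := hex
        have hsub : ∀ d, ρ <:+ d :: τ := fun d => h1.trans (List.suffix_cons _ _)
        have hrec : ∀ d, _ := fun d => ihb S c₀ (d :: τ) H hS hc (by simp; omega)
          (fun τ' h' => hC τ' ((hsub d).trans h'))
        by_cases hA : ∃ col, E (fun τ => τ.length < H ∧ C τ = col) a ρ
        · exact Or.inl hA
        · right
          refine ⟨τ, h1, ⟨by omega, h3⟩, fun d => ?_⟩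
          rcases hrec d with ⟨col, h⟩ | h
          · exact absurd ⟨col, E_up _ _ _ (hsub d) h⟩ hA
          · exact h
      · push Not at hex
        left
        have hcard : (S.erase c₀).card = k + 1 := by rw [Finset.card_erase_of_mem hc]; omega
        obtain ⟨c₁, hc₁⟩ : (S.erase c₀).Nonempty := Finset.card_pos.1 (by omega)
        have hle : ρ.length + a ^ (k + 1) ≤ H := by omega
        have up : ∀ col, E (fun τ => τ.length < ρ.length + a ^ (k + 1) ∧ C τ = col) a ρ →
            E (fun τ => τ.length < H ∧ C τ = col) a ρ := fun col =>
          E_mono (fun τ h => ⟨by omega, h.2⟩) a ρ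
        rcases ihk a (S.erase c₀) c₁ ρ (ρ.length + a ^ (k + 1)) hcard hc₁ (by rw [gg_diag])
          (fun τ h1 h2 => Finset.mem_erase.2 ⟨hex τ h1 h2, hC τ h1 (by omega)⟩) with ⟨col, h⟩ | h
        · exact ⟨col, up col h⟩
        · exact ⟨c₁, up c₁ h⟩

lemma realize {K n H : ℕ} (c : JVert H → Fin K) (C : List Bool → Fin K)
    (hC : ∀ τ : JVert H, C τ.1 = c τ) (col : Fin K)
    (he : E (fun τ => τ.length < H ∧ C τ = col) n []) :
    ∃ γ : TVert n → TVert H, IsMonotoneEmb n H γ ∧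
      ∀ (σ : JVert n) (τ : JVert H), γ (Sum.inr σ) = Sum.inr τ → c τ = col := by
  obtain ⟨f, h1, h2⟩ := E_extract n he
  refine ⟨gam f (fun σ h => (h1 σ h).1), gam_mono f h2 _, ?_⟩
  intro σ τ h
  simp only [gam, Sum.inr.injEq] at h
  rw [← h, ← hC]
  exact (h1 σ.1 σ.2).2

end MonoEmb

/-- from the proof of Lemma 5.2. There is a function `g` with
`g a b 1 = a`, `g a 1 (k+1) ≤ g a a k` and `g a (b+1) (k+1) ≤ g a b (k+1) + g a a k`,
such that for every `k`-colouring of the major vertices of `T_{g a b k}` and every colour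
`c₀`, either there is a monotone homeomorphic embedding of `T_a` whose major vertices map
to major vertices of one colour, or there is a monotone homeomorphic embedding of `T_b`
whose major vertices map to major vertices of colour `c₀`. -/
theorem monochromatic_or_fixed_colour_embedding :
    ∃ g : ℕ → ℕ → ℕ → ℕ,
      (∀ a b, g a b 1 = a) ∧
      (∀ a k, g a 1 (k + 1) ≤ g a a k) ∧
      (∀ a b k, g a (b + 1) (k + 1) ≤ g a b (k + 1) + g a a k) ∧
      ∀ a b k : ℕ, 1 ≤ a → 1 ≤ b → 1 ≤ k →
        ∀ (c : JVert (g a b k) → Fin k) (c₀ : Fin k),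
          (∃ γ : TVert a → TVert (g a b k), IsMonotoneEmb a (g a b k) γ ∧
            ∃ col : Fin k, ∀ (σ : JVert a) (τ : JVert (g a b k)),
              γ (Sum.inr σ) = Sum.inr τ → c τ = col) ∨
          (∃ γ : TVert b → TVert (g a b k), IsMonotoneEmb b (g a b k) γ ∧
            ∀ (σ : JVert b) (τ : JVert (g a b k)),
              γ (Sum.inr σ) = Sum.inr τ → c τ = c₀) := by
  refine ⟨MonoEmb.gg, fun a b => rfl, ?_, ?_, ?_⟩
  · intro a k
    cases k with
    | zero => simp [MonoEmb.gg]
    | succ k => rw [MonoEmb.gg_diag]; simp [MonoEmb.gg]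
  · intro a b k
    cases k with
    | zero => simp [MonoEmb.gg]
    | succ k => rw [MonoEmb.gg_diag]; simp only [MonoEmb.gg]; apply le_of_eq; ring
  · intro a b k _ _ hk c c₀
    obtain ⟨k, rfl⟩ : ∃ k', k = k' + 1 := ⟨k - 1, by omega⟩
    have hC : ∀ τ : JVert (MonoEmb.gg a b (k + 1)),
        (fun l : List Bool => if h : l.length + 1 ≤ MonoEmb.gg a b (k + 1) then c ⟨l, h⟩ else c₀) τ.1
          = c τ := by
      rintro ⟨τ, h⟩
      simp only [dif_pos h]
    rcases MonoEmb.ramsey a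
      (fun l => if h : l.length + 1 ≤ MonoEmb.gg a b (k + 1) then c ⟨l, h⟩ else c₀)
      k b Finset.univ c₀ [] (MonoEmb.gg a b (k + 1)) (by simp) (by simp) (by simp) (by simp)
      with ⟨col, h⟩ | h
    · left
      obtain ⟨γ, h1, h2⟩ := MonoEmb.realize c _ hC col h
      exact ⟨γ, h1, col, h2⟩
    · right
      exact MonoEmb.realize c _ hC c₀ h
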